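/- Let (X,ρ,μ) be a space of homogeneous type with quasi-triangle constant K₀ and doubling constant L, let 0 < q ≤ p < ∞, and let ω be an A₁(X)-weight. Then there exists a positive constant C, depending only on K₀, L, p, and q, such that for every R ∈ (1,∞) and every measurable f with ‖f‖_{L^p_ω(X)} < ∞, one has sup_{s∈(0,1)} s^{p/q} ∫_X (∫_{X∖B(x,R)} |f(x)−f(y)|^q/(U(x,y)·ρ(x,y)^{sq}) dμ(y))^{p/q} ω(x) dμ(x) ≤ C·[ω]²_{A₁(X)}·‖f‖^p_{L^p_ω(X)}. -/

import Mathlib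

noncomputable section

open MeasureTheory Filter Set
open scoped ENNReal NNReal Topology

namespace Paper

variable {X : Type*} [MeasurableSpace X]

/-- The ball with center `x` and radius `r` for the quasi-metric `ρ`. -/
def ball (ρ : X → X → ℝ) (x : X) (r : ℝ) : Set X := {y | ρ x y < r}

/-- `(X, ρ, μ)` is a quasi-metric measure space with quasi-triangle constant `K₀`:
`ρ` is a quasi-metric with constant `K₀` and all `ρ`-balls are `μ`-measurable. -/
structure IsQuasiMetricMeasure (ρ : X → X → ℝ) (μ : Measure X) (K₀ : ℝ) : Prop where
  nonneg : ∀ x y, 0 ≤ ρ x y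
  eq_zero_iff : ∀ x y, ρ x y = 0 ↔ x = y
  symm : ∀ x y, ρ x y = ρ y x
  one_le : 1 ≤ K₀
  triangle : ∀ x y z, ρ x z ≤ K₀ * (ρ x y + ρ y z)
  measurableSet_ball : ∀ x r, MeasurableSet (ball ρ x r)

/-- The doubling condition for `μ` with doubling constant `L ∈ [1, ∞)`:
`0 < μ(B(x,2r)) ≤ L · μ(B(x,r)) < ∞` for all `x` and `r > 0`. -/
def IsDoubling (ρ : X → X → ℝ) (μ : Measure X) (L : ℝ≥0∞) : Prop :=
  1 ≤ L ∧ L < ∞ ∧ ∀ (x : X) (r : ℝ), 0 < r →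
    0 < μ (ball ρ x r) ∧ μ (ball ρ x (2 * r)) ≤ L * μ (ball ρ x r) ∧ μ (ball ρ x r) < ∞

/-- `U(x,y) := min{μ(B(x,ρ(x,y))), μ(B(y,ρ(x,y)))}`. -/
def U (ρ : X → X → ℝ) (μ : Measure X) (x y : X) : ℝ≥0∞ :=
  min (μ (ball ρ x (ρ x y))) (μ (ball ρ y (ρ x y)))

/-- The `A₁(X)` characteristic of a weight `ω`. -/
def A1Const (ρ : X → X → ℝ) (μ : Measure X) (ω : X → ℝ≥0∞) : ℝ≥0∞ :=
  ⨆ (x : X) (r : ℝ) (_ : 0 < r),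
    ((∫⁻ y in ball ρ x r, ω y ∂μ) / μ (ball ρ x r)) /
      essInf ω (μ.restrict (ball ρ x r))

/-!
Split the complement of `B(x, R)` into the annuli `2 ^ j * R ≤ ρ x y < 2 ^ (j + 1) * R`. By
doubling, on the `j`-th annulus `1 / U(x, y)` is comparable to the kernel of an averaging operator
over balls of radius comparable to `2 ^ j * R`, and such an operator is bounded on `L^∞` and, by the
`A₁` condition, on `L¹(ω)`. The factor `ρ(x, y) ^ (-sq)` weights the `j`-th operator by
`(2 ^ j * R) ^ (-sq)`, so that the whole kernel is dominated by a single one to which the weighted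
Schur test applies, with constants of size `(1 - 2 ^ (-sq))⁻¹`. The factor `s ^ (p / q)` absorbs
these, because `s * (1 - 2 ^ (-q)) ≤ 1 - 2 ^ (-sq)` by Bernoulli's inequality.
-/

section Lintegral

variable {μ : Measure X}

lemma inv_le_mul_inv_of_le_mul {a b c : ℝ≥0∞} (hc₀ : c ≠ 0) (hc : c ≠ ∞) (h : a ≤ c * b) :
    b⁻¹ ≤ c * a⁻¹ := by
  calc b⁻¹ = c * (c * b)⁻¹ := by
        rw [ENNReal.mul_inv (.inl hc₀) (.inl hc), ← mul_assoc, ENNReal.mul_inv_cancel hc₀ hc,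
          one_mul]
    _ ≤ c * a⁻¹ := by gcongr

lemma ofReal_mul_one_sub_le_one_sub_rpow (a : ℝ≥0∞) {s : ℝ} (hs₀ : 0 ≤ s) (hs₁ : s ≤ 1) :
    ENNReal.ofReal s * (1 - a) ≤ 1 - a ^ s := by
  rcases le_total 1 a with ha | ha
  · simp [tsub_eq_zero_of_le ha]
  obtain ⟨x, hx, rfl⟩ : ∃ x : ℝ, 0 ≤ x ∧ a = ENNReal.ofReal x :=
    ⟨a.toReal, ENNReal.toReal_nonneg,
      (ENNReal.ofReal_toReal (ne_top_of_le_ne_top ENNReal.one_ne_top ha)).symm⟩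
  have bernoulli : (1 + (x - 1)) ^ s ≤ 1 + s * (x - 1) :=
    rpow_one_add_le_one_add_mul_self (by linarith) hs₀ hs₁
  rw [add_sub_cancel] at bernoulli
  rw [ENNReal.ofReal_rpow_of_nonneg hx hs₀, ← ENNReal.ofReal_one, ← ENNReal.ofReal_sub _ hx,
    ← ENNReal.ofReal_sub _ (by positivity), ← ENNReal.ofReal_mul hs₀]
  exact ENNReal.ofReal_le_ofReal (by linarith)

lemma ofReal_mul_inv_one_sub_rpow_le (a : ℝ≥0∞) {s : ℝ} (hs₀ : 0 ≤ s) (hs₁ : s ≤ 1) :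
    ENNReal.ofReal s * (1 - a ^ s)⁻¹ ≤ (1 - a)⁻¹ := by
  rw [ENNReal.le_inv_iff_mul_le, mul_right_comm]
  calc ENNReal.ofReal s * (1 - a) * (1 - a ^ s)⁻¹ ≤ (1 - a ^ s) * (1 - a ^ s)⁻¹ := by
        gcongr
        exact ofReal_mul_one_sub_le_one_sub_rpow a hs₀ hs₁
    _ ≤ 1 := ENNReal.mul_inv_le_one _

lemma lintegral_mul_rpow_le {h g : X → ℝ≥0∞} (hh : Measurable h) (hg : Measurable g) {t : ℝ}
    (ht : 1 ≤ t) :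
    (∫⁻ y, h y * g y ∂μ) ^ t ≤ (∫⁻ y, g y ∂μ) ^ (t - 1) * ∫⁻ y, h y ^ t * g y ∂μ := by
  have ht₀ : 0 < t := by linarith
  have holder := ENNReal.rpow_le_rpow (eLpNorm'_le_eLpNorm'_mul_rpow_measure_univ
    (μ := μ.withDensity g) zero_lt_one ht hh.aestronglyMeasurable) ht₀.le
  simp only [eLpNorm', enorm_eq_self, ENNReal.rpow_one, div_one, one_div] at holder
  rw [lintegral_withDensity_eq_lintegral_mul _ hg hh,
    lintegral_withDensity_eq_lintegral_mul _ hg (hh.pow_const t), withDensity_apply _ .univ,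
    setLIntegral_univ, ENNReal.mul_rpow_of_nonneg _ _ ht₀.le, ← ENNReal.rpow_mul,
    ← ENNReal.rpow_mul, inv_mul_cancel₀ ht₀.ne', ENNReal.rpow_one, sub_mul,
    inv_mul_cancel₀ ht₀.ne', one_mul] at holder
  rw [mul_comm (_ ^ (t - 1))]
  simpa only [Pi.mul_apply, mul_comm (g _)] using holder

lemma essInf_le_setLIntegral_div_measure {ω : X → ℝ≥0∞} {B : Set X} (hB₀ : μ B ≠ 0)
    (hB : μ B ≠ ∞) : essInf ω (μ.restrict B) ≤ (∫⁻ y in B, ω y ∂μ) / μ B := by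
  rw [ENNReal.le_div_iff_mul_le (.inl hB₀) (.inl hB)]
  simpa using lintegral_mono_ae (ae_essInf_le (f := ω) (μ := μ.restrict B))

end Lintegral

section SchurTest

/-- A nonnegative kernel `G` satisfying the hypotheses of the weighted Schur test: its integral
in the second variable is at most `S`, and its transpose maps the weight `ω` to at most `T * ω`.
These are the endpoint bounds on `L^∞` and on `L¹(ω)` of the operator with kernel `G`. -/
structure IsSchurKernel (μ : Measure X) (ω : X → ℝ≥0∞) (G : X → X → ℝ≥0∞) (S T : ℝ≥0∞) :
    Prop where
  measurable : Measurable (Function.uncurry G)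
  lintegral_right_le : ∀ᵐ x ∂μ, ∫⁻ y, G x y ∂μ ≤ S
  lintegral_left_le : ∀ᵐ y ∂μ, ∫⁻ x, G x y * ω x ∂μ ≤ T * ω y

namespace IsSchurKernel

variable {μ : Measure X} {ω : X → ℝ≥0∞}

lemma measurable_mul_weight {G : X → X → ℝ≥0∞} {S T : ℝ≥0∞} (hG : IsSchurKernel μ ω G S T)
    (hω : Measurable ω) (y : X) : Measurable fun x => G x y * ω x :=
  hG.measurable.of_uncurry_right.mul hω

lemma const_mul {G : X → X → ℝ≥0∞} {S T : ℝ≥0∞} (hG : IsSchurKernel μ ω G S T)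
    (hω : Measurable ω) (a : ℝ≥0∞) :
    IsSchurKernel μ ω (fun x y => a * G x y) (a * S) (a * T) where
  measurable := hG.measurable.const_mul a
  lintegral_right_le := by
    filter_upwards [hG.lintegral_right_le] with x hx
    rw [lintegral_const_mul a hG.measurable.of_uncurry_left]
    gcongr
  lintegral_left_le := by
    filter_upwards [hG.lintegral_left_le] with y hy
    simp only [mul_assoc]
    rw [lintegral_const_mul a (hG.measurable_mul_weight hω y)]
    gcongr

lemma tsum {ι : Type*} [Countable ι] {G : ι → X → X → ℝ≥0∞} {S T : ι → ℝ≥0∞}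
    (hG : ∀ i, IsSchurKernel μ ω (G i) (S i) (T i)) (hω : Measurable ω) :
    IsSchurKernel μ ω (fun x y => ∑' i, G i x y) (∑' i, S i) (∑' i, T i) where
  measurable := Measurable.tsum fun i => (hG i).measurable
  lintegral_right_le := by
    filter_upwards [ae_all_iff.2 fun i => (hG i).lintegral_right_le] with x hx
    rw [lintegral_tsum fun i => (hG i).measurable.of_uncurry_left.aemeasurable]
    exact ENNReal.tsum_le_tsum hx
  lintegral_left_le := by
    filter_upwards [ae_all_iff.2 fun i => (hG i).lintegral_left_le] with y hy
    simp only [← ENNReal.tsum_mul_right]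
    rw [lintegral_tsum fun i => ((hG i).measurable_mul_weight hω y).aemeasurable]
    exact ENNReal.tsum_le_tsum hy

variable {G : X → X → ℝ≥0∞} {S T : ℝ≥0∞}

lemma lintegral_lintegral_mul_le [SFinite μ] (hG : IsSchurKernel μ ω G S T) (hω : Measurable ω)
    {h : X → ℝ≥0∞} (hh : Measurable h) :
    ∫⁻ x, (∫⁻ y, h y * G x y ∂μ) * ω x ∂μ ≤ T * ∫⁻ y, h y * ω y ∂μ := by
  have hmeas : Measurable (Function.uncurry fun x y => h y * G x y * ω x) :=
    ((hh.comp measurable_snd).mul hG.measurable).mul (hω.comp measurable_fst)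
  calc ∫⁻ x, (∫⁻ y, h y * G x y ∂μ) * ω x ∂μ
      = ∫⁻ x, ∫⁻ y, h y * G x y * ω x ∂μ ∂μ := lintegral_congr fun x =>
        (lintegral_mul_const _ (hh.mul hG.measurable.of_uncurry_left)).symm
    _ = ∫⁻ y, ∫⁻ x, h y * G x y * ω x ∂μ ∂μ := lintegral_lintegral_swap hmeas.aemeasurable
    _ = ∫⁻ y, h y * ∫⁻ x, G x y * ω x ∂μ ∂μ := by
        simp only [mul_assoc]
        exact lintegral_congr fun y =>
          lintegral_const_mul _ (hG.measurable_mul_weight hω y)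
    _ ≤ ∫⁻ y, T * (h y * ω y) ∂μ := by
        refine lintegral_mono_ae (hG.lintegral_left_le.mono fun y hy => ?_)
        calc h y * ∫⁻ x, G x y * ω x ∂μ ≤ h y * (T * ω y) := by gcongr
          _ = T * (h y * ω y) := by ring
    _ = T * ∫⁻ y, h y * ω y ∂μ := lintegral_const_mul _ (hh.mul hω)

theorem lintegral_rpow_mul_le [SFinite μ] (hG : IsSchurKernel μ ω G S T) (hω : Measurable ω)
    {h : X → ℝ≥0∞} (hh : Measurable h) {t : ℝ} (ht : 1 ≤ t) :
    ∫⁻ x, (∫⁻ y, h y * G x y ∂μ) ^ t * ω x ∂μ ≤ S ^ (t - 1) * T * ∫⁻ y, h y ^ t * ω y ∂μ := by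
  have hmeas : Measurable fun x => (∫⁻ y, h y ^ t * G x y ∂μ) * ω x :=
    (((hh.comp measurable_snd).pow_const t).mul hG.measurable).lintegral_prod_right.mul hω
  calc ∫⁻ x, (∫⁻ y, h y * G x y ∂μ) ^ t * ω x ∂μ
      ≤ ∫⁻ x, S ^ (t - 1) * ((∫⁻ y, h y ^ t * G x y ∂μ) * ω x) ∂μ := by
        refine lintegral_mono_ae (hG.lintegral_right_le.mono fun x hx => ?_)
        rw [← mul_assoc]
        gcongr
        refine (lintegral_mul_rpow_le hh hG.measurable.of_uncurry_left ht).trans ?_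
        gcongr
    _ = S ^ (t - 1) * ∫⁻ x, (∫⁻ y, h y ^ t * G x y ∂μ) * ω x ∂μ := lintegral_const_mul _ hmeas
    _ ≤ S ^ (t - 1) * (T * ∫⁻ y, h y ^ t * ω y ∂μ) := by
        gcongr
        exact hG.lintegral_lintegral_mul_le hω (hh.pow_const t)
    _ = S ^ (t - 1) * T * ∫⁻ y, h y ^ t * ω y ∂μ := by ring

lemma ae_lintegral_add_rpow_mul_le (hG : IsSchurKernel μ ω G S T) {F : X → ℝ≥0∞} {q : ℝ}
    (hq : 0 ≤ q) :
    ∀ᵐ x ∂μ, ∫⁻ y, (F x + F y) ^ q * G x y ∂μ ≤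
      2 ^ q * (F x ^ q * S + ∫⁻ y, F y ^ q * G x y ∂μ) := by
  filter_upwards [hG.lintegral_right_le] with x hx
  have hGx : Measurable (G x) := hG.measurable.of_uncurry_left
  calc ∫⁻ y, (F x + F y) ^ q * G x y ∂μ
      ≤ ∫⁻ y, 2 ^ q * (F x ^ q * G x y + F y ^ q * G x y) ∂μ := by
        refine lintegral_mono fun y => ?_
        rw [← add_mul, ← mul_assoc]
        gcongr
        exact ENNReal.add_rpow_le_two_rpow_mul_rpow_add_rpow _ _ hq
    _ = 2 ^ q * (F x ^ q * ∫⁻ y, G x y ∂μ + ∫⁻ y, F y ^ q * G x y ∂μ) := by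
        rw [lintegral_const_mul' _ _ (by finiteness), lintegral_add_left (hGx.const_mul _),
          lintegral_const_mul _ hGx]
    _ ≤ 2 ^ q * (F x ^ q * S + ∫⁻ y, F y ^ q * G x y ∂μ) := by gcongr

theorem lintegral_add_rpow_rpow_mul_le [SFinite μ] (hG : IsSchurKernel μ ω G S T)
    (hω : Measurable ω) {F : X → ℝ≥0∞} (hF : Measurable F) {p q : ℝ} (hq : 0 < q) (hqp : q ≤ p) :
    ∫⁻ x, (∫⁻ y, (F x + F y) ^ q * G x y ∂μ) ^ (p / q) * ω x ∂μ ≤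
      2 ^ (p + p / q) * (S ^ (p / q) + S ^ (p / q - 1) * T) * ∫⁻ x, F x ^ p * ω x ∂μ := by
  set t := p / q
  have ht : 1 ≤ t := (one_le_div hq).2 hqp
  have ht₀ : 0 ≤ t := by linarith
  have hqt : q * t = p := mul_div_cancel₀ p hq.ne'
  have hpow (x : X) : (F x ^ q) ^ t = F x ^ p := by rw [← ENNReal.rpow_mul, hqt]
  have hFω : Measurable fun x => F x ^ p * ω x := (hF.pow_const p).mul hω
  have schur := hG.lintegral_rpow_mul_le hω (hF.pow_const q) ht
  simp only [hpow] at schur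
  calc ∫⁻ x, (∫⁻ y, (F x + F y) ^ q * G x y ∂μ) ^ t * ω x ∂μ
      ≤ ∫⁻ x, 2 ^ (p + t) *
          (S ^ t * (F x ^ p * ω x) + (∫⁻ y, F y ^ q * G x y ∂μ) ^ t * ω x) ∂μ := by
        refine lintegral_mono_ae ?_
        filter_upwards [hG.ae_lintegral_add_rpow_mul_le (F := F) hq.le] with x hx
        calc (∫⁻ y, (F x + F y) ^ q * G x y ∂μ) ^ t * ω x
            ≤ (2 ^ q * (F x ^ q * S + ∫⁻ y, F y ^ q * G x y ∂μ)) ^ t * ω x := by gcongr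
          _ ≤ 2 ^ p * (2 ^ t * (F x ^ p * S ^ t + (∫⁻ y, F y ^ q * G x y ∂μ) ^ t)) * ω x := by
              rw [ENNReal.mul_rpow_of_nonneg _ _ ht₀, ← ENNReal.rpow_mul, hqt, ← hpow,
                ← ENNReal.mul_rpow_of_nonneg _ _ ht₀]
              gcongr
              exact ENNReal.add_rpow_le_two_rpow_mul_rpow_add_rpow _ _ ht₀
          _ = _ := by
              rw [ENNReal.rpow_add p t two_ne_zero ENNReal.ofNat_ne_top]
              ring
    _ = 2 ^ (p + t) * (S ^ t * ∫⁻ x, F x ^ p * ω x ∂μ +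
          ∫⁻ x, (∫⁻ y, F y ^ q * G x y ∂μ) ^ t * ω x ∂μ) := by
        rw [lintegral_const_mul' _ _ (by finiteness),
          lintegral_add_left (hFω.const_mul _), lintegral_const_mul _ hFω]
    _ ≤ 2 ^ (p + t) * (S ^ t * ∫⁻ x, F x ^ p * ω x ∂μ +
          S ^ (t - 1) * T * ∫⁻ x, F x ^ p * ω x ∂μ) := by gcongr
    _ = _ := by ring

end IsSchurKernel

end SchurTest

section QuasiMetric

lemma iUnion_ball_nat_succ {Y : Type*} (ρ : Y → Y → ℝ) (x : Y) :
    ⋃ n : ℕ, ball ρ x (n + 1) = univ := by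
  refine eq_univ_of_forall fun y => mem_iUnion.2 ?_
  obtain ⟨n, hn⟩ := exists_nat_gt (ρ x y)
  exact ⟨n, hn.trans (lt_add_one _)⟩

lemma exists_pairwise_le_and_forall_exists_lt {Y : Type*} {ρ : Y → Y → ℝ}
    (hself : ∀ x, ρ x x = 0) (hsymm : ∀ x y, ρ x y = ρ y x) {r : ℝ} (hr : 0 < r) :
    ∃ S : Set Y, S.Pairwise (fun a b => r ≤ ρ a b) ∧ ∀ y, ∃ a ∈ S, ρ a y < r := by
  obtain ⟨S, hS⟩ := zorn_subset {S : Set Y | S.Pairwise fun a b => r ≤ ρ a b}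
    fun c hc hchain => ⟨⋃₀ c, (pairwise_sUnion hchain.directedOn).2 hc,
      fun _ => subset_sUnion_of_mem⟩
  refine ⟨S, hS.prop, fun y => ?_⟩
  by_contra! hfar
  have hinsert : (insert y S).Pairwise fun a b => r ≤ ρ a b :=
    hS.prop.insert fun a ha _ => ⟨hsymm y a ▸ hfar a ha, hfar a ha⟩
  have hy : y ∈ S := hS.le_of_ge hinsert (subset_insert y S) (mem_insert y S)
  exact (hself y ▸ hfar y hy).not_gt hr

variable {ρ : X → X → ℝ} {μ : Measure X} {K₀ : ℝ} {L : ℝ≥0∞}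

lemma IsQuasiMetricMeasure.disjoint_ball (hρ : IsQuasiMetricMeasure ρ μ K₀) {a b : X} {δ : ℝ}
    (hab : 2 * K₀ * δ ≤ ρ a b) : Disjoint (ball ρ a δ) (ball ρ b δ) := by
  refine Set.disjoint_left.2 fun z (hza : ρ a z < δ) (hzb : ρ b z < δ) => ?_
  have hK := hρ.one_le
  have htri := hρ.triangle a z b
  rw [hρ.symm z b] at htri
  nlinarith

lemma IsDoubling.sigmaFinite [Nonempty X] (hμ : IsDoubling ρ μ L) : SigmaFinite μ := by
  obtain ⟨o⟩ := ‹Nonempty X›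
  exact ⟨⟨⟨fun n : ℕ => ball ρ o (n + 1), fun _ => trivial,
    fun n => (hμ.2.2 o _ (by positivity)).2.2, iUnion_ball_nat_succ ρ o⟩⟩⟩

lemma IsDoubling.measure_ball_ne_zero (hμ : IsDoubling ρ μ L) (x : X) {r : ℝ} (hr : 0 < r) :
    μ (ball ρ x r) ≠ 0 :=
  (hμ.2.2 x r hr).1.ne'

lemma IsDoubling.measure_ball_ne_top (hμ : IsDoubling ρ μ L) (x : X) {r : ℝ} (hr : 0 < r) :
    μ (ball ρ x r) ≠ ∞ :=
  (hμ.2.2 x r hr).2.2.ne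

lemma IsDoubling.const_pow_ne_zero (hμ : IsDoubling ρ μ L) (m : ℕ) : L ^ m ≠ 0 :=
  (one_pos.trans_le (one_le_pow₀ hμ.1)).ne'

lemma IsDoubling.const_pow_ne_top (hμ : IsDoubling ρ μ L) (m : ℕ) : L ^ m ≠ ∞ :=
  ENNReal.pow_ne_top hμ.2.1.ne

lemma IsDoubling.measure_ball_two_pow_mul_le (hμ : IsDoubling ρ μ L) (m : ℕ) (x : X) {r : ℝ}
    (hr : 0 < r) : μ (ball ρ x (2 ^ m * r)) ≤ L ^ m * μ (ball ρ x r) := by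
  induction m with
  | zero => simp
  | succ k ih =>
    rw [pow_succ', mul_assoc, pow_succ', mul_assoc]
    calc μ (ball ρ x (2 * (2 ^ k * r))) ≤ L * μ (ball ρ x (2 ^ k * r)) :=
          (hμ.2.2 x (2 ^ k * r) (by positivity)).2.1
      _ ≤ L * (L ^ k * μ (ball ρ x r)) := by gcongr

lemma IsDoubling.measure_ball_le (hμ : IsDoubling ρ μ L) (hρ : IsQuasiMetricMeasure ρ μ K₀)
    {m : ℕ} {a b : X} {r R : ℝ} (hr : 0 < r) (hR : K₀ * (ρ a b + R) ≤ 2 ^ m * r) :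
    μ (ball ρ a R) ≤ L ^ m * μ (ball ρ b r) := by
  refine (measure_mono fun z (hz : ρ a z < R) => ?_).trans
    (hμ.measure_ball_two_pow_mul_le m b hr)
  have hK := hρ.one_le
  calc ρ b z ≤ K₀ * (ρ b a + ρ a z) := hρ.triangle b a z
    _ < K₀ * (ρ a b + R) := by rw [hρ.symm b a]; gcongr
    _ ≤ 2 ^ m * r := hR

lemma IsDoubling.countable_of_pairwise_le [SFinite μ] (hμ : IsDoubling ρ μ L)
    (hρ : IsQuasiMetricMeasure ρ μ K₀) {r : ℝ} (hr : 0 < r) {S : Set X}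
    (hS : S.Pairwise fun a b => r ≤ ρ a b) : S.Countable := by
  have hK : 0 < K₀ := one_pos.trans_le hρ.one_le
  have hδ : 0 < r / (2 * K₀) := by positivity
  have hcountable := Measure.countable_meas_pos_of_disjoint_iUnion (μ := μ)
    (As := fun a : S => ball ρ (a : X) (r / (2 * K₀))) (fun a => hρ.measurableSet_ball _ _)
    fun a b hab => hρ.disjoint_ball <| by
      rw [mul_div_cancel₀ r (by positivity)]
      exact hS a.2 b.2 (Subtype.coe_ne_coe.2 hab)
  simpa only [(hμ.2.2 _ _ hδ).1, ofPred_true, countable_univ_iff, countable_coe_iff]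
    using hcountable

lemma IsDoubling.exists_measurable_net_index [Nonempty X] (hμ : IsDoubling ρ μ L)
    (hρ : IsQuasiMetricMeasure ρ μ K₀) {r : ℝ} (hr : 0 < r) :
    ∃ (c : ℕ → X) (n : X → ℕ), Measurable n ∧ ∀ x, ρ (c (n x)) x < r := by
  classical
  have := hμ.sigmaFinite
  obtain ⟨S, hsep, hcover⟩ := exists_pairwise_le_and_forall_exists_lt
    (fun x => (hρ.eq_zero_iff x x).2 rfl) hρ.symm hr
  have hne : S.Nonempty := let ⟨a, ha, _⟩ := hcover (Classical.arbitrary X); ⟨a, ha⟩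
  obtain ⟨c, rfl⟩ := (hμ.countable_of_pairwise_le hρ hr hsep).exists_eq_range hne
  simp only [exists_range_iff] at hcover
  exact ⟨c, fun x => Nat.find (hcover x),
    measurable_find hcover fun k => hρ.measurableSet_ball (c k) r,
    fun x => Nat.find_spec (hcover x)⟩

end QuasiMetric

section A1

variable {ρ : X → X → ℝ} {μ : Measure X} {K₀ : ℝ} {L : ℝ≥0∞} {ω : X → ℝ≥0∞}

lemma le_A1Const (ρ : X → X → ℝ) (μ : Measure X) (ω : X → ℝ≥0∞) (x : X) {r : ℝ} (hr : 0 < r) :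
    ((∫⁻ y in ball ρ x r, ω y ∂μ) / μ (ball ρ x r)) / essInf ω (μ.restrict (ball ρ x r)) ≤
      A1Const ρ μ ω :=
  le_iSup_of_le x <| le_iSup_of_le r <| le_iSup_of_le hr le_rfl

lemma one_le_A1Const (hμ : IsDoubling ρ μ L) {x : X} {r : ℝ} (hr : 0 < r)
    (hω₀ : ∫⁻ y in ball ρ x r, ω y ∂μ ≠ 0) (hω : ∫⁻ y in ball ρ x r, ω y ∂μ < ∞) :
    1 ≤ A1Const ρ μ ω := by
  have hB₀ := hμ.measure_ball_ne_zero x hr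
  have hB := hμ.measure_ball_ne_top x hr
  refine le_trans ?_ (le_A1Const ρ μ ω x hr)
  rw [ENNReal.le_div_iff_mul_le (.inr (ENNReal.div_pos hω₀ hB).ne')
    (.inr (ENNReal.div_lt_top hω.ne hB₀).ne), one_mul]
  exact essInf_le_setLIntegral_div_measure hB₀ hB

lemma ae_eq_zero_or_one_le_A1Const [Nonempty X] (hμ : IsDoubling ρ μ L) (hωm : Measurable ω)
    (hω : ∀ (x : X) (r : ℝ), 0 < r → ∫⁻ y in ball ρ x r, ω y ∂μ < ∞) :
    ω =ᵐ[μ] 0 ∨ 1 ≤ A1Const ρ μ ω := by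
  obtain ⟨o⟩ := ‹Nonempty X›
  refine or_iff_not_imp_right.2 fun hA => ?_
  have hzero (n : ℕ) : ∫⁻ y in ball ρ o (n + 1), ω y ∂μ = 0 :=
    of_not_not fun hne => hA (one_le_A1Const hμ (by positivity) hne (hω o _ (by positivity)))
  rw [← lintegral_eq_zero_iff hωm, ← setLIntegral_univ, ← iUnion_ball_nat_succ ρ o]
  simpa [hzero] using lintegral_iUnion_le (μ := μ) (fun n : ℕ => ball ρ o (n + 1)) ω

lemma A1Const_le_sq (hμ : IsDoubling ρ μ L)
    (hω : ∀ (x : X) (r : ℝ), 0 < r → ∫⁻ y in ball ρ x r, ω y ∂μ < ∞) :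
    A1Const ρ μ ω ≤ A1Const ρ μ ω ^ 2 := by
  refine iSup_le fun x => iSup_le fun r => iSup_le fun hr => ?_
  rcases eq_or_ne (∫⁻ y in ball ρ x r, ω y ∂μ) 0 with hzero | hne
  · simp [hzero]
  · exact (le_A1Const ρ μ ω x hr).trans
      (le_self_pow₀ (one_le_A1Const hμ hr hne (hω x r hr)) two_ne_zero)

lemma ae_setLIntegral_div_measure_ball_le_A1Const_mul (hρ : IsQuasiMetricMeasure ρ μ K₀)
    (hμ : IsDoubling ρ μ L) {x : X} {r : ℝ} (hr : 0 < r)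
    (hω : ∫⁻ y in ball ρ x r, ω y ∂μ < ∞) (hA : A1Const ρ μ ω ≠ ∞) :
    ∀ᵐ y ∂μ, y ∈ ball ρ x r →
      (∫⁻ z in ball ρ x r, ω z ∂μ) / μ (ball ρ x r) ≤ A1Const ρ μ ω * ω y := by
  have hB₀ := hμ.measure_ball_ne_zero x hr
  have hessInf : essInf ω (μ.restrict (ball ρ x r)) ≠ ∞ :=
    ne_top_of_le_ne_top (ENNReal.div_lt_top hω.ne hB₀).ne
      (essInf_le_setLIntegral_div_measure hB₀ (hμ.measure_ball_ne_top x hr))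
  have havg := le_A1Const ρ μ ω x hr
  rw [ENNReal.div_le_iff_le_mul (.inr hA) (.inl hessInf)] at havg
  filter_upwards [(ae_restrict_iff' (hρ.measurableSet_ball x r)).1
    (ae_essInf_le (f := ω))] with y hy hyB
  exact havg.trans (by gcongr; exact hy hyB)

end A1

section NetKernel

/-- The kernel of the operator sending `f` to its mean over the ball of radius `R` around
`c (n x)`, where `c` enumerates a net and `n x` is the index of a net point close to `x`. It
replaces the mean over the ball around `x` itself, whose kernel need not be jointly measurable
because `ρ` is not assumed to be. -/
def netKernel (ρ : X → X → ℝ) (μ : Measure X) (c : ℕ → X) (n : X → ℕ) (R : ℝ) (x y : X) : ℝ≥0∞ :=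
  (ball ρ (c (n x)) R).indicator (fun _ => (μ (ball ρ (c (n x)) R))⁻¹) y

variable {ρ : X → X → ℝ} {μ : Measure X} {K₀ : ℝ} {L : ℝ≥0∞} {ω : X → ℝ≥0∞} {c : ℕ → X}
  {n : X → ℕ} {r R : ℝ} {m : ℕ}

lemma measurable_uncurry_netKernel (hρ : IsQuasiMetricMeasure ρ μ K₀) (hn : Measurable n) :
    Measurable (Function.uncurry (netKernel ρ μ c n R)) := by
  have hindex : Measurable fun z : ℕ × X =>
      (ball ρ (c z.1) R).indicator (fun _ => (μ (ball ρ (c z.1) R))⁻¹) z.2 :=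
    measurable_from_prod_countable_right fun i =>
      Measurable.indicator (f := fun _ => (μ (ball ρ (c i) R))⁻¹) measurable_const
        (hρ.measurableSet_ball (c i) R)
  exact hindex.comp ((hn.comp measurable_fst).prodMk measurable_snd)

lemma lintegral_netKernel (hρ : IsQuasiMetricMeasure ρ μ K₀) (hμ : IsDoubling ρ μ L) (hR : 0 < R)
    (x : X) : ∫⁻ y, netKernel ρ μ c n R x y ∂μ = 1 := by
  simp only [netKernel]
  rw [lintegral_indicator_const (hρ.measurableSet_ball _ _),
    ENNReal.inv_mul_cancel (hμ.measure_ball_ne_zero _ hR) (hμ.measure_ball_ne_top _ hR)]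

lemma inv_U_le_mul_netKernel (hρ : IsQuasiMetricMeasure ρ μ K₀) (hμ : IsDoubling ρ μ L)
    (hm : 6 * K₀ ^ 2 ≤ 2 ^ m) (hr : 0 < r) {x y : X} (hx : ρ (c (n x)) x < r)
    (hxy : r ≤ ρ x y) (hxy' : ρ x y < 2 * r) :
    (U ρ μ x y)⁻¹ ≤ L ^ m * netKernel ρ μ c n (3 * K₀ * r) x y := by
  have hK := hρ.one_le
  have hy : ρ (c (n x)) y < 3 * K₀ * r := by
    calc ρ (c (n x)) y ≤ K₀ * (ρ (c (n x)) x + ρ x y) := hρ.triangle _ _ _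
      _ < K₀ * (r + 2 * r) := by gcongr
      _ = 3 * K₀ * r := by ring
  have hmeasure {b : X} (hb : ρ (c (n x)) b ≤ 3 * K₀ * r) :
      μ (ball ρ (c (n x)) (3 * K₀ * r)) ≤ L ^ m * μ (ball ρ b (ρ x y)) := by
    refine hμ.measure_ball_le hρ (hr.trans_le hxy) ?_
    calc K₀ * (ρ (c (n x)) b + 3 * K₀ * r) ≤ K₀ * (3 * K₀ * r + 3 * K₀ * r) := by gcongr
      _ = 6 * K₀ ^ 2 * r := by ring
      _ ≤ 2 ^ m * ρ x y := by gcongr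
  have hU : μ (ball ρ (c (n x)) (3 * K₀ * r)) ≤ L ^ m * U ρ μ x y := by
    rw [U, mul_min]
    exact le_min (hmeasure (by nlinarith)) (hmeasure hy.le)
  rw [netKernel, indicator_of_mem (show y ∈ ball ρ (c (n x)) _ from hy)]
  exact inv_le_mul_inv_of_le_mul (hμ.const_pow_ne_zero m) (hμ.const_pow_ne_top m) hU

lemma netKernel_mul_le_indicator (hρ : IsQuasiMetricMeasure ρ μ K₀) (hμ : IsDoubling ρ μ L)
    (hm : 9 * K₀ ^ 4 ≤ 2 ^ m) (hr : 0 < r) (hn : ∀ x, ρ (c (n x)) x < r) (x y : X) :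
    netKernel ρ μ c n (3 * K₀ * r) x y * ω x ≤
      (ball ρ (c (n y)) (5 * K₀ ^ 3 * r)).indicator
        (fun z => L ^ m * (μ (ball ρ (c (n y)) (5 * K₀ ^ 3 * r)))⁻¹ * ω z) x := by
  have hK := hρ.one_le
  by_cases hy : y ∈ ball ρ (c (n x)) (3 * K₀ * r)
  swap
  · simp [netKernel, hy]
  have hcenters : ρ (c (n y)) (c (n x)) < 4 * K₀ ^ 2 * r := by
    calc ρ (c (n y)) (c (n x)) ≤ K₀ * (ρ (c (n y)) y + ρ y (c (n x))) := hρ.triangle _ _ _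
      _ < K₀ * (K₀ * r + 3 * K₀ * r) := by
        rw [hρ.symm y]
        gcongr
        · exact (hn y).trans_le (le_mul_of_one_le_left hr.le hK)
        · exact hy
      _ = 4 * K₀ ^ 2 * r := by ring
  have hx : x ∈ ball ρ (c (n y)) (5 * K₀ ^ 3 * r) := by
    calc ρ (c (n y)) x ≤ K₀ * (ρ (c (n y)) (c (n x)) + ρ (c (n x)) x) := hρ.triangle _ _ _
      _ < K₀ * (4 * K₀ ^ 2 * r + K₀ ^ 2 * r) := by
        gcongr
        exact (hn x).trans_le (le_mul_of_one_le_left hr.le (one_le_pow₀ hK))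
      _ = 5 * K₀ ^ 3 * r := by ring
  have hmeasure : μ (ball ρ (c (n y)) (5 * K₀ ^ 3 * r)) ≤
      L ^ m * μ (ball ρ (c (n x)) (3 * K₀ * r)) := by
    refine hμ.measure_ball_le hρ (by positivity) ?_
    calc K₀ * (ρ (c (n y)) (c (n x)) + 5 * K₀ ^ 3 * r)
        ≤ K₀ * (4 * K₀ ^ 3 * r + 5 * K₀ ^ 3 * r) := by
          gcongr
          refine hcenters.le.trans ?_
          gcongr
          norm_num
      _ = 9 * K₀ ^ 4 * r := by ring
      _ ≤ 2 ^ m * (3 * K₀ * r) := by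
          gcongr
          nlinarith
  rw [netKernel, indicator_of_mem hy, indicator_of_mem hx]
  gcongr
  exact inv_le_mul_inv_of_le_mul (hμ.const_pow_ne_zero m) (hμ.const_pow_ne_top m) hmeasure

-- Since `c` is countable, the `A₁` condition holds almost everywhere on all balls around net
-- points simultaneously; this is why the majorant is supported on a ball centered at a net point.
lemma ae_lintegral_netKernel_mul_le (hρ : IsQuasiMetricMeasure ρ μ K₀) (hμ : IsDoubling ρ μ L)
    (hm : 9 * K₀ ^ 4 ≤ 2 ^ m) (hωm : Measurable ω)
    (hω : ∀ (x : X) (r : ℝ), 0 < r → ∫⁻ y in ball ρ x r, ω y ∂μ < ∞)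
    (hA : A1Const ρ μ ω ≠ ∞) (hr : 0 < r) (hn : ∀ x, ρ (c (n x)) x < r) :
    ∀ᵐ y ∂μ, ∫⁻ x, netKernel ρ μ c n (3 * K₀ * r) x y * ω x ∂μ ≤
      L ^ m * A1Const ρ μ ω * ω y := by
  have hK := hρ.one_le
  have hR : 0 < 5 * K₀ ^ 3 * r := by positivity
  filter_upwards [ae_all_iff.2 fun i =>
    ae_setLIntegral_div_measure_ball_le_A1Const_mul hρ hμ hR (hω (c i) _ hR) hA] with y hy
  have hyB : y ∈ ball ρ (c (n y)) (5 * K₀ ^ 3 * r) :=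
    (hn y).trans_le (le_mul_of_one_le_left hr.le (by linarith [one_le_pow₀ (n := 3) hK]))
  calc ∫⁻ x, netKernel ρ μ c n (3 * K₀ * r) x y * ω x ∂μ
      ≤ ∫⁻ x, (ball ρ (c (n y)) (5 * K₀ ^ 3 * r)).indicator
          (fun z => L ^ m * (μ (ball ρ (c (n y)) (5 * K₀ ^ 3 * r)))⁻¹ * ω z) x ∂μ :=
        lintegral_mono fun x => netKernel_mul_le_indicator hρ hμ hm hr hn x y
    _ = L ^ m * ((∫⁻ x in ball ρ (c (n y)) (5 * K₀ ^ 3 * r), ω x ∂μ) /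
          μ (ball ρ (c (n y)) (5 * K₀ ^ 3 * r))) := by
        rw [lintegral_indicator (hρ.measurableSet_ball _ _), lintegral_const_mul _ hωm,
          ENNReal.div_eq_inv_mul, mul_assoc]
    _ ≤ L ^ m * (A1Const ρ μ ω * ω y) := by
        gcongr
        exact hy _ hyB
    _ = L ^ m * A1Const ρ μ ω * ω y := (mul_assoc _ _ _).symm

end NetKernel

section NonlocalKernel

variable {ρ : X → X → ℝ} {μ : Measure X} {K₀ : ℝ} {L : ℝ≥0∞} {ω : X → ℝ≥0∞} {m : ℕ}

lemma exists_isSchurKernel_inv_U_le [Nonempty X] (hρ : IsQuasiMetricMeasure ρ μ K₀)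
    (hμ : IsDoubling ρ μ L) (hm : 9 * K₀ ^ 4 ≤ 2 ^ m) (hωm : Measurable ω)
    (hω : ∀ (x : X) (r : ℝ), 0 < r → ∫⁻ y in ball ρ x r, ω y ∂μ < ∞)
    (hA : A1Const ρ μ ω ≠ ∞) {r : ℝ} (hr : 0 < r) :
    ∃ G, IsSchurKernel μ ω G 1 (L ^ m * A1Const ρ μ ω) ∧
      ∀ x y, r ≤ ρ x y → ρ x y < 2 * r → (U ρ μ x y)⁻¹ ≤ L ^ m * G x y := by
  have hK := hρ.one_le
  have hm' : 6 * K₀ ^ 2 ≤ 2 ^ m := le_trans (by gcongr <;> norm_num) hm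
  obtain ⟨c, n, hn, hcn⟩ := hμ.exists_measurable_net_index hρ hr
  refine ⟨netKernel ρ μ c n (3 * K₀ * r), ⟨measurable_uncurry_netKernel hρ hn, ?_,
    ae_lintegral_netKernel_mul_le hρ hμ hm hωm hω hA hr hcn⟩,
    fun x y => inv_U_le_mul_netKernel hρ hμ hm' hr (hcn x)⟩
  exact .of_forall fun x => (lintegral_netKernel hρ hμ (by positivity) x).le

lemma ofReal_rpow_neg_le {σ R d : ℝ} (hσ : 0 ≤ σ) {j : ℕ} (hd : 2 ^ j * R ≤ d) :
    ENNReal.ofReal d ^ (-σ) ≤ (2 ^ (-σ)) ^ j * ENNReal.ofReal R ^ (-σ) := by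
  have hscale : ((2 : ℝ≥0∞) ^ (-σ)) ^ j * ENNReal.ofReal R ^ (-σ) =
      ENNReal.ofReal (2 ^ j * R) ^ (-σ) := by
    rw [ENNReal.ofReal_mul (by positivity), ENNReal.ofReal_pow zero_le_two, ENNReal.ofReal_ofNat,
      ENNReal.mul_rpow_of_ne_top (by finiteness) ENNReal.ofReal_ne_top, ← ENNReal.rpow_natCast,
      ← ENNReal.rpow_natCast, ← ENNReal.rpow_mul, ← ENNReal.rpow_mul, mul_comm (-σ)]
  rw [hscale, ENNReal.rpow_neg, ENNReal.rpow_neg, ENNReal.inv_le_inv]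
  gcongr

lemma exists_isSchurKernel_inv_U_mul_rpow_le [Nonempty X] (hρ : IsQuasiMetricMeasure ρ μ K₀)
    (hμ : IsDoubling ρ μ L) (hm : 9 * K₀ ^ 4 ≤ 2 ^ m) (hωm : Measurable ω)
    (hω : ∀ (x : X) (r : ℝ), 0 < r → ∫⁻ y in ball ρ x r, ω y ∂μ < ∞)
    (hA : A1Const ρ μ ω ≠ ∞) {R : ℝ} (hR : 0 < R) {σ : ℝ} (hσ : 0 ≤ σ) :
    ∃ G, IsSchurKernel μ ω G (1 - 2 ^ (-σ))⁻¹ ((1 - 2 ^ (-σ))⁻¹ * (L ^ m * A1Const ρ μ ω)) ∧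
      ∀ x y, R ≤ ρ x y → (U ρ μ x y * ENNReal.ofReal (ρ x y) ^ σ)⁻¹ ≤
        L ^ m * ENNReal.ofReal R ^ (-σ) * G x y := by
  choose g hg hUg using fun j : ℕ =>
    exists_isSchurKernel_inv_U_le hρ hμ hm hωm hω hA (r := 2 ^ j * R) (by positivity)
  refine ⟨fun x y => ∑' j : ℕ, (2 ^ (-σ)) ^ j * g j x y, ?_, fun x y hxy => ?_⟩
  · simpa only [mul_one, ENNReal.tsum_mul_right, ENNReal.tsum_geometric]
      using IsSchurKernel.tsum (fun j => (hg j).const_mul hωm ((2 ^ (-σ)) ^ j)) hωm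
  obtain ⟨j, hj, hj'⟩ := exists_nat_pow_near ((one_le_div hR).2 hxy) one_lt_two
  rw [le_div_iff₀ hR] at hj
  rw [div_lt_iff₀ hR, pow_succ', mul_assoc] at hj'
  have hρ₀ : 0 < ENNReal.ofReal (ρ x y) := ENNReal.ofReal_pos.2 (hR.trans_le hxy)
  have hpow₀ : ENNReal.ofReal (ρ x y) ^ σ ≠ 0 := (ENNReal.rpow_pos hρ₀ ENNReal.ofReal_ne_top).ne'
  have hpow : ENNReal.ofReal (ρ x y) ^ σ ≠ ∞ := by finiteness
  rw [ENNReal.mul_inv (.inr hpow) (.inr hpow₀), ← ENNReal.rpow_neg]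
  calc (U ρ μ x y)⁻¹ * ENNReal.ofReal (ρ x y) ^ (-σ)
      ≤ (L ^ m * g j x y) * ((2 ^ (-σ)) ^ j * ENNReal.ofReal R ^ (-σ)) := by
        gcongr
        · exact hUg j x y hj hj'
        · exact ofReal_rpow_neg_le hσ hj
    _ = L ^ m * ENNReal.ofReal R ^ (-σ) * ((2 ^ (-σ)) ^ j * g j x y) := by ring
    _ ≤ L ^ m * ENNReal.ofReal R ^ (-σ) * ∑' j : ℕ, (2 ^ (-σ)) ^ j * g j x y := by
        gcongr
        exact ENNReal.le_tsum (f := fun j => (2 ^ (-σ)) ^ j * g j x y) j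

end NonlocalKernel

section TailEstimate

variable {ρ : X → X → ℝ} {μ : Measure X} {K₀ : ℝ} {L : ℝ≥0∞} {ω : X → ℝ≥0∞} {E : Type*}
  [SeminormedAddCommGroup E] {f : X → E}

lemma setLIntegral_compl_ball_le {G : X → X → ℝ≥0∞} {D : ℝ≥0∞} (hD : D ≠ ∞) {q σ R : ℝ}
    (hq : 0 ≤ q) {x : X} (hball : MeasurableSet (ball ρ x R))
    (hUG : ∀ y, R ≤ ρ x y → (U ρ μ x y * ENNReal.ofReal (ρ x y) ^ σ)⁻¹ ≤ D * G x y) :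
    ∫⁻ y in (ball ρ x R)ᶜ, ‖f x - f y‖ₑ ^ q / (U ρ μ x y * ENNReal.ofReal (ρ x y) ^ σ) ∂μ ≤
      D * ∫⁻ y, (‖f x‖ₑ + ‖f y‖ₑ) ^ q * G x y ∂μ := by
  calc ∫⁻ y in (ball ρ x R)ᶜ, ‖f x - f y‖ₑ ^ q / (U ρ μ x y * ENNReal.ofReal (ρ x y) ^ σ) ∂μ
      ≤ ∫⁻ y in (ball ρ x R)ᶜ, (‖f x‖ₑ + ‖f y‖ₑ) ^ q * (D * G x y) ∂μ := by
        refine setLIntegral_mono' hball.compl fun y hy => ?_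
        rw [div_eq_mul_inv]
        gcongr
        · exact enorm_sub_le
        · exact hUG y (not_lt.1 hy)
    _ ≤ ∫⁻ y, (‖f x‖ₑ + ‖f y‖ₑ) ^ q * (D * G x y) ∂μ := setLIntegral_le_lintegral _ _
    _ = D * ∫⁻ y, (‖f x‖ₑ + ‖f y‖ₑ) ^ q * G x y ∂μ := by
        simp only [mul_left_comm _ D]
        exact lintegral_const_mul' _ _ hD

variable [MeasurableSpace E] [OpensMeasurableSpace E]

lemma lintegral_setLIntegral_compl_ball_rpow_le [Nonempty X] (hρ : IsQuasiMetricMeasure ρ μ K₀)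
    (hμ : IsDoubling ρ μ L) {m : ℕ} (hm : 9 * K₀ ^ 4 ≤ 2 ^ m) (hωm : Measurable ω)
    (hω : ∀ (x : X) (r : ℝ), 0 < r → ∫⁻ y in ball ρ x r, ω y ∂μ < ∞)
    (hA : A1Const ρ μ ω ≠ ∞) {R : ℝ} (hR : 0 < R) {p q σ : ℝ} (hq : 0 < q) (hqp : q ≤ p)
    (hσ : 0 ≤ σ) (hf : Measurable f) :
    ∫⁻ x, (∫⁻ y in (ball ρ x R)ᶜ, ‖f x - f y‖ₑ ^ q /
        (U ρ μ x y * ENNReal.ofReal (ρ x y) ^ σ) ∂μ) ^ (p / q) * ω x ∂μ ≤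
      (L ^ m * ENNReal.ofReal R ^ (-σ)) ^ (p / q) * 2 ^ (p + p / q) *
        ((1 - 2 ^ (-σ))⁻¹ ^ (p / q) * (1 + L ^ m * A1Const ρ μ ω)) *
          ∫⁻ x, ‖f x‖ₑ ^ p * ω x ∂μ := by
  have := hμ.sigmaFinite
  have ht : 1 ≤ p / q := (one_le_div hq).2 hqp
  have ht₀ : 0 ≤ p / q := by linarith
  obtain ⟨G, hG, hUG⟩ := exists_isSchurKernel_inv_U_mul_rpow_le hρ hμ hm hωm hω hA hR hσ
  have hD : L ^ m * ENNReal.ofReal R ^ (-σ) ≠ ∞ :=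
    ENNReal.mul_ne_top (hμ.const_pow_ne_top m)
      (ENNReal.rpow_ne_top_of_ne_zero (ENNReal.ofReal_pos.2 hR).ne' ENNReal.ofReal_ne_top)
  set D := L ^ m * ENNReal.ofReal R ^ (-σ)
  set S : ℝ≥0∞ := (1 - 2 ^ (-σ))⁻¹
  have hS : S ^ (p / q - 1) * S = S ^ (p / q) := by
    simpa using (ENNReal.rpow_add_of_nonneg (x := S) (p / q - 1) 1 (by linarith) zero_le_one).symm
  calc ∫⁻ x, (∫⁻ y in (ball ρ x R)ᶜ, ‖f x - f y‖ₑ ^ q /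
        (U ρ μ x y * ENNReal.ofReal (ρ x y) ^ σ) ∂μ) ^ (p / q) * ω x ∂μ
      ≤ ∫⁻ x, D ^ (p / q) *
          ((∫⁻ y, (‖f x‖ₑ + ‖f y‖ₑ) ^ q * G x y ∂μ) ^ (p / q) * ω x) ∂μ := by
        refine lintegral_mono fun x => ?_
        rw [← mul_assoc, ← ENNReal.mul_rpow_of_nonneg _ _ ht₀]
        gcongr
        exact setLIntegral_compl_ball_le hD hq.le (hρ.measurableSet_ball x R) (hUG x)
    _ = D ^ (p / q) *
          ∫⁻ x, (∫⁻ y, (‖f x‖ₑ + ‖f y‖ₑ) ^ q * G x y ∂μ) ^ (p / q) * ω x ∂μ :=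
        lintegral_const_mul' _ _ (ENNReal.rpow_ne_top_of_nonneg ht₀ hD)
    _ ≤ D ^ (p / q) * (2 ^ (p + p / q) * (S ^ (p / q) +
          S ^ (p / q - 1) * (S * (L ^ m * A1Const ρ μ ω))) * ∫⁻ x, ‖f x‖ₑ ^ p * ω x ∂μ) := by
        gcongr
        exact hG.lintegral_add_rpow_rpow_mul_le hωm hf.enorm hq hqp
    _ = _ := by
        rw [← mul_assoc (S ^ (p / q - 1)), hS]
        ring

lemma ofReal_rpow_mul_lintegral_setLIntegral_compl_ball_rpow_le [Nonempty X]
    (hρ : IsQuasiMetricMeasure ρ μ K₀) (hμ : IsDoubling ρ μ L) {m : ℕ} (hm : 9 * K₀ ^ 4 ≤ 2 ^ m)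
    (hωm : Measurable ω) (hω : ∀ (x : X) (r : ℝ), 0 < r → ∫⁻ y in ball ρ x r, ω y ∂μ < ∞)
    (hA : A1Const ρ μ ω ≠ ∞) {R : ℝ} (hR : 0 < R) {p q s : ℝ} (hq : 0 < q) (hqp : q ≤ p)
    (hs₀ : 0 ≤ s) (hs₁ : s ≤ 1) (hf : Measurable f) :
    ENNReal.ofReal s ^ (p / q) *
        ∫⁻ x, (∫⁻ y in (ball ρ x R)ᶜ, ‖f x - f y‖ₑ ^ q /
          (U ρ μ x y * ENNReal.ofReal (ρ x y) ^ (s * q)) ∂μ) ^ (p / q) * ω x ∂μ ≤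
      (L ^ m) ^ (p / q) * 2 ^ (p + p / q) * (1 - 2 ^ (-q))⁻¹ ^ (p / q) * (2 * L ^ m) *
        A1Const ρ μ ω * ENNReal.ofReal R ^ (-(s * p)) * ∫⁻ x, ‖f x‖ₑ ^ p * ω x ∂μ := by
  rcases ae_eq_zero_or_one_le_A1Const hμ hωm hω with hω₀ | hA₁
  · rw [lintegral_congr_ae (g := 0) (hω₀.mono fun x hx => by simp [hx])]
    simp
  have ht₀ : 0 ≤ p / q := div_nonneg (hq.le.trans hqp) hq.le
  have hgeometric : ENNReal.ofReal s ^ (p / q) * (1 - 2 ^ (-(s * q)))⁻¹ ^ (p / q) ≤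
      (1 - 2 ^ (-q))⁻¹ ^ (p / q) := by
    rw [← ENNReal.mul_rpow_of_nonneg _ _ ht₀, neg_mul_eq_mul_neg, mul_comm s, ENNReal.rpow_mul]
    gcongr
    exact ofReal_mul_inv_one_sub_rpow_le _ hs₀ hs₁
  have hweight : 1 + L ^ m * A1Const ρ μ ω ≤ 2 * L ^ m * A1Const ρ μ ω := by
    rw [mul_assoc, two_mul]
    gcongr
    exact one_le_mul (one_le_pow₀ hμ.1) hA₁
  have hradius : (ENNReal.ofReal R ^ (-(s * q))) ^ (p / q) = ENNReal.ofReal R ^ (-(s * p)) := by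
    rw [← ENNReal.rpow_mul, neg_mul, mul_assoc, mul_div_cancel₀ p hq.ne']
  grw [lintegral_setLIntegral_compl_ball_rpow_le hρ hμ hm hωm hω hA hR hq hqp
    (mul_nonneg hs₀ hq.le) hf, hweight, ENNReal.mul_rpow_of_nonneg _ _ ht₀, hradius,
    ← hgeometric]
  exact le_of_eq (by ring)

end TailEstimate

theorem statement3_general (K₀ : ℝ) (L : ℝ≥0∞) (p q : ℝ) (hq : 0 < q) (hqp : q ≤ p) :
    ∃ C : ℝ≥0, 0 < C ∧
      ∀ (Y E : Type*) [MeasurableSpace Y] [Nonempty Y] [SeminormedAddCommGroup E]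
        [MeasurableSpace E] [OpensMeasurableSpace E] (ρ : Y → Y → ℝ) (μ : Measure Y),
        IsQuasiMetricMeasure ρ μ K₀ → IsDoubling ρ μ L →
        ∀ ω : Y → ℝ≥0∞, Measurable ω →
        (∀ (x : Y) (r : ℝ), 0 < r → ∫⁻ y in ball ρ x r, ω y ∂μ < ∞) →
        A1Const ρ μ ω < ∞ →
        ∀ R : ℝ, 0 < R →
        ∀ f : Y → E, Measurable f →
        ∀ s ∈ Ioc (0 : ℝ) 1,
        ENNReal.ofReal s ^ (p / q) *
            ∫⁻ x, (∫⁻ y in (ball ρ x R)ᶜ, ‖f x - f y‖ₑ ^ q /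
                (U ρ μ x y * ENNReal.ofReal (ρ x y) ^ (s * q)) ∂μ) ^ (p / q) * ω x ∂μ ≤
          C * A1Const ρ μ ω * ENNReal.ofReal R ^ (-(s * p)) * ∫⁻ x, ‖f x‖ₑ ^ p * ω x ∂μ := by
  obtain ⟨m, hm⟩ := pow_unbounded_of_one_lt (9 * K₀ ^ 4) one_lt_two
  let C₀ : ℝ≥0∞ := (L ^ m) ^ (p / q) * 2 ^ (p + p / q) * (1 - 2 ^ (-q))⁻¹ ^ (p / q) * (2 * L ^ m)
  refine ⟨C₀.toNNReal + 1, by positivity, ?_⟩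
  intro Y E _ _ _ _ _ ρ μ hρ hμ ω hωm hω hA R hR f hf s hs
  have hC₀ : C₀ ≠ ∞ := by
    have hL := hμ.const_pow_ne_top m
    have ht₀ : 0 ≤ p / q := div_nonneg (hq.le.trans hqp) hq.le
    have hratio : (2 : ℝ≥0∞) ^ (-q) < 1 :=
      ENNReal.rpow_lt_one_of_one_lt_of_neg ENNReal.one_lt_two (neg_neg_of_pos hq)
    have hgeometric : (1 - 2 ^ (-q) : ℝ≥0∞)⁻¹ ≠ ∞ :=
      ENNReal.inv_ne_top.2 (tsub_pos_of_lt hratio).ne'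
    finiteness
  refine (ofReal_rpow_mul_lintegral_setLIntegral_compl_ball_rpow_le hρ hμ hm.le hωm hω hA.ne hR hq
    hqp hs.1.le hs.2 hf).trans ?_
  gcongr
  rw [ENNReal.coe_add, ENNReal.coe_toNNReal hC₀]
  exact le_self_add

theorem statement3 (K₀ : ℝ) (L : ℝ≥0∞) (p q : ℝ) (hq : 0 < q) (hqp : q ≤ p) :
    ∃ C : ℝ≥0, 0 < C ∧
      ∀ (Y : Type*) [MeasurableSpace Y] [Nonempty Y] (ρ : Y → Y → ℝ) (μ : Measure Y),
        IsQuasiMetricMeasure ρ μ K₀ → IsDoubling ρ μ L →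
        ∀ ω : Y → ℝ≥0∞, Measurable ω →
        (∀ (x : Y) (r : ℝ), 0 < r → (∫⁻ y in ball ρ x r, ω y ∂μ) < ∞) →
        A1Const ρ μ ω < ∞ →
        ∀ R : ℝ, 1 < R →
        ∀ f : Y → ℝ, Measurable f →
          (∫⁻ x, ENNReal.ofReal |f x| ^ p * ω x ∂μ) < ∞ →
        ∀ s : ℝ, s ∈ Set.Ioo (0:ℝ) 1 →
        ENNReal.ofReal s ^ (p / q) *
            (∫⁻ x, (∫⁻ y in (ball ρ x R)ᶜ, ENNReal.ofReal |f x - f y| ^ q /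
                (U ρ μ x y * ENNReal.ofReal (ρ x y) ^ (s * q)) ∂μ) ^ (p / q) * ω x ∂μ) ≤
          (C : ℝ≥0∞) * A1Const ρ μ ω ^ 2 * (∫⁻ x, ENNReal.ofReal |f x| ^ p * ω x ∂μ) := by
  obtain ⟨C, hC, H⟩ := statement3_general K₀ L p q hq hqp
  refine ⟨C, hC, fun Y _ _ ρ μ hρ hμ ω hωm hω hA R hR f hf _ s hs => ?_⟩
  simp only [← Real.enorm_eq_ofReal_abs]
  have hRs : ENNReal.ofReal R ^ (-(s * p)) ≤ 1 :=
    ENNReal.rpow_le_one_of_one_le_of_neg (ENNReal.one_le_ofReal.2 hR.le)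
      (neg_neg_of_pos (mul_pos hs.1 (hq.trans_le hqp)))
  grw [H Y ℝ ρ μ hρ hμ ω hωm hω hA R (by linarith) f hf s (Ioo_subset_Ioc_self hs), hRs, mul_one,
    A1Const_le_sq hμ hω]

end Paper

end
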